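/- arXiv:2404.04196 — 4 statements merged into one kernel-verified Lean document; each statement's English description precedes it below -/
import Mathlib

section
/- Let n ≥ 1 and let A be an n×n integer matrix with nonzero determinant. If some complex eigenvalue of A is an algebraic unit, then the union over all k ≥ 1 of the sets A^{-k}ℤ^n = {x ∈ ℝ^n : A^k x ∈ ℤ^n} is not dense in ℝ^n. -/
/-!
Since `z⁻¹` is integral, reversing an integral equation for it gives `h = r * X + 1` in `ℤ[X]` with
`h(z) = 0` (`exists_reverse_annihilator`). By spectral mapping `h(A)` is singular, so there is a
nonzero integer row vector `w` with `w h(A) = 0` (`exists_vecMul_aeval_eq_zero`). Putting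
`B = -r(A)`, this reads `w B A = w`, and `B` commutes with `A`, so `w = (w B^k) A^k` for all `k`,
where `w B^k` is an integer vector. Hence `w ⬝ x` is an integer whenever `A^k x` is integral: the
union lies in the proper closed set `{x | w ⬝ x ∈ ℤ}`.
-/

open Polynomial in
/-- The reverse of a monic equation for `z⁻¹` annihilates `z` and has constant coefficient `1`. -/
theorem exists_reverse_annihilator {z : ℂ} (hz : z ≠ 0) (h : IsIntegral ℤ z⁻¹) :
    ∃ r : ℤ[X], aeval z (r * X + 1) = 0 := by
  obtain ⟨p, hp, hpz⟩ := h
  refine ⟨p.reverse.divX, ?_⟩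
  have h1 : p.reverse.divX * X + 1 = p.reverse := by
    conv_rhs => rw [← divX_mul_X_add p.reverse]
    simp [coeff_zero_reverse, hp.leadingCoeff]
  rw [h1, aeval_def]
  let _ : Invertible z⁻¹ := invertibleOfNonzero (inv_ne_zero hz)
  have := (eval₂_reverse_eq_zero_iff (algebraMap ℤ ℂ) z⁻¹ p).mpr hpz
  simpa [invOf_eq_inv] using this

open Polynomial in
theorem exists_vecMul_aeval_eq_zero {n : ℕ} (A : Matrix (Fin n) (Fin n) ℤ) {z : ℂ}
    (hz : aeval z A.charpoly = 0) (h : ℤ[X]) (hh : aeval z h = 0) :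
    ∃ w : Fin n → ℤ, w ≠ 0 ∧ Matrix.vecMul w (aeval A h) = 0 := by
  rw [Matrix.exists_vecMul_eq_zero_iff]
  set φ : Matrix (Fin n) (Fin n) ℤ →+* Matrix (Fin n) (Fin n) ℂ :=
    (Int.castRingHom ℂ).mapMatrix with hφ
  have hmem : z ∈ spectrum ℂ (φ A) := by
    rw [Matrix.mem_spectrum_iff_isRoot_charpoly, hφ, RingHom.mapMatrix_apply,
      Matrix.charpoly_map, IsRoot, eval_map]
    exact hz
  have hmap : aeval (φ A) (h.map (Int.castRingHom ℂ)) = φ (aeval A h) := by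
    rw [← algebraMap_int_eq, aeval_map_algebraMap]
    exact aeval_algHom_apply φ.toIntAlgHom A h
  have h0 : (0 : ℂ) ∈ spectrum ℂ (φ (aeval A h)) := by
    rw [← hmap]
    refine spectrum.subset_polynomial_aeval _ _ ⟨z, hmem, ?_⟩
    simpa [eval_map, aeval_def] using hh
  rw [spectrum.zero_mem_iff, Matrix.isUnit_iff_isUnit_det, isUnit_iff_ne_zero, not_not, hφ,
    ← RingHom.map_det] at h0
  simpa using h0

/-- Let `n ≥ 1` and `A` an `n×n` integer matrix with nonzero determinant. If some complex
eigenvalue of `A` is an algebraic unit, then the union over all `k ≥ 1` of the sets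
`A^{-k}ℤ^n = {x ∈ ℝ^n : A^k x ∈ ℤ^n}` is not dense in Euclidean space `ℝ^n`. -/
theorem stmt_1 (n : ℕ) (hn : 1 ≤ n) (A : Matrix (Fin n) (Fin n) ℤ) (hdet : A.det ≠ 0)
    (hunit : ∃ z : ℂ, (Polynomial.aeval z) A.charpoly = 0 ∧
      z ≠ 0 ∧ IsIntegral ℤ z ∧ IsIntegral ℤ z⁻¹) :
    ¬ Dense (⋃ k ∈ {k : ℕ | 1 ≤ k},
        {x : EuclideanSpace ℝ (Fin n) | ∀ i : Fin n, ∃ m : ℤ,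
          ((A.map (Int.cast : ℤ → ℝ)) ^ k).mulVec x i = (m : ℝ)}) := by
  obtain ⟨z, hz, hz0, -, hzi⟩ := hunit
  obtain ⟨r, hr⟩ := exists_reverse_annihilator hz0 hzi
  obtain ⟨w, hw0, hw⟩ := exists_vecMul_aeval_eq_zero A hz _ hr
  set B := -(Polynomial.aeval A r) with hB
  have hcomm : Commute B A := by
    have h1 := Polynomial.aeval_X (R := ℤ) A
    have h2 : Commute (Polynomial.aeval A r) (Polynomial.aeval A (Polynomial.X : Polynomial ℤ)) :=
      (Commute.all r Polynomial.X).map (Polynomial.aeval A)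
    rw [h1] at h2
    exact h2.neg_left
  have hBA : Matrix.vecMul w (B * A) = w := by
    have h1 : B * A = 1 - Polynomial.aeval A (r * Polynomial.X + 1) := by
      simp [hB]
    rw [h1, Matrix.vecMul_sub, hw, Matrix.vecMul_one, sub_zero]
  have hpow : ∀ k : ℕ, Matrix.vecMul w ((B * A) ^ k) = w := by
    intro k
    induction k with
    | zero => simp
    | succ k ih => rw [pow_succ, ← Matrix.vecMul_vecMul, ih, hBA]
  set f : EuclideanSpace ℝ (Fin n) → ℝ := fun x => ∑ i, (w i : ℝ) * x i with hf
  have hfc : Continuous f := by fun_prop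
  have hclosed : IsClosed (f ⁻¹' Set.range (Int.cast : ℤ → ℝ)) :=
    Int.isClosedEmbedding_coe_real.isClosed_range.preimage hfc
  intro hdense
  have hsub : (⋃ k ∈ {k : ℕ | 1 ≤ k},
        {x : EuclideanSpace ℝ (Fin n) | ∀ i : Fin n, ∃ m : ℤ,
          ((A.map (Int.cast : ℤ → ℝ)) ^ k).mulVec x i = (m : ℝ)}) ⊆
      f ⁻¹' Set.range (Int.cast : ℤ → ℝ) := by
    intro x hx
    simp only [Set.mem_iUnion, Set.mem_ofPred_eq] at hx
    obtain ⟨k, -, hx⟩ := hx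
    choose m hm using hx
    set u := Matrix.vecMul w (B ^ k) with hu
    have huw : Matrix.vecMul u (A ^ k) = w := by
      rw [hu, Matrix.vecMul_vecMul, ← hcomm.mul_pow, hpow]
    have hcast : Matrix.vecMul (fun i => (u i : ℝ)) ((A.map (Int.cast : ℤ → ℝ)) ^ k) =
        fun i => (w i : ℝ) := by
      have h1 : (A.map (Int.cast : ℤ → ℝ)) ^ k = (A ^ k).map (Int.castRingHom ℝ) :=
        (map_pow (Int.castRingHom ℝ).mapMatrix A k).symm
      funext i
      rw [h1, ← huw]
      exact (RingHom.map_vecMul (Int.castRingHom ℝ) (A ^ k) u i).symm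
    refine ⟨u ⬝ᵥ m, ?_⟩
    have h2 : f x = (fun i => (w i : ℝ)) ⬝ᵥ (x : Fin n → ℝ) := rfl
    rw [h2, ← hcast, ← Matrix.dotProduct_mulVec (fun i => (u i : ℝ)), funext hm]
    simp [dotProduct]
  have huniv : f ⁻¹' Set.range (Int.cast : ℤ → ℝ) = Set.univ :=
    Set.univ_subset_iff.mp (hdense.closure_eq ▸ closure_minimal hsub hclosed)
  obtain ⟨i, hi⟩ := Function.ne_iff.mp hw0
  have hi' : (w i : ℝ) ≠ 0 := by exact_mod_cast hi
  -- The vector `(2 wᵢ)⁻¹ eᵢ` pairs with `w` to `1/2`.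
  have hmem : EuclideanSpace.single i ((2 * (w i : ℝ))⁻¹) ∈
      f ⁻¹' Set.range (Int.cast : ℤ → ℝ) := huniv ▸ Set.mem_univ _
  obtain ⟨m, hm⟩ := hmem
  have h3 : f (EuclideanSpace.single i ((2 * (w i : ℝ))⁻¹)) = 1 / 2 := by
    simp [hf]
    field_simp
  rw [h3] at hm
  have h4 : (2 * m : ℝ) = 1 := by linarith
  have h5 : 2 * m = 1 := by exact_mod_cast h4
  omega
end

section
/- Let K be a field, L a Lie algebra over K, and ψ : L → L a Lie algebra homomorphism. For λ ∈ K let E^λ denote the generalized eigenspace of ψ for λ, i.e., E^λ = {v ∈ L : (ψ − λ·id)^n v = 0 for some n ≥ 0}. Then for all λ, μ ∈ K, the bracket of the generalized eigenspaces lands in the generalized eigenspace of the product: ⁅E^λ, E^μ⁆ ⊆ E^{λμ}. Concretely, if (ψ − λ·id)^m X = 0 and (ψ − μ·id)^n Y = 0, then (ψ − λμ·id)^{m+n−1} ⁅X, Y⁆ = 0. -/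
/-!
Write `A = ψ - λ`, `B = ψ - μ`, `T = ψ - λμ`. The twisted Leibniz rule
`T ⁅X, Y⁆ = ⁅A X, ψ Y⁆ + λ • ⁅X, B Y⁆` trades one application of `T` for one of `A` or of `B`.
Since `ψ` commutes with `B`, replacing `Y` by `ψ Y` preserves `B ^ n Y = 0`, so a double induction
on the nilpotency orders `m` and `n` shows that `T ^ (m + n - 1)` kills `⁅X, Y⁆`; when `m = 0` or
`n = 0` the bracket itself vanishes, which covers the truncated exponent.
-/

/-- The twisted Leibniz rule for a Lie algebra endomorphism. -/
lemma sub_smul_lie {K L : Type*} [Field K] [LieRing L] [LieAlgebra K L]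
    (ψ : L →ₗ⁅K⁆ L) (lam mu : K) (X Y : L) :
    (ψ.toLinearMap - (lam * mu) • (LinearMap.id : L →ₗ[K] L)) ⁅X, Y⁆ =
      ⁅(ψ.toLinearMap - lam • (LinearMap.id : L →ₗ[K] L)) X, ψ Y⁆ +
        lam • ⁅X, (ψ.toLinearMap - mu • (LinearMap.id : L →ₗ[K] L)) Y⁆ := by
  simp [smul_sub, mul_smul]

lemma pow_sub_smul_map_eq_zero {K L : Type*} [Field K] [LieRing L] [LieAlgebra K L]
    (ψ : L →ₗ⁅K⁆ L) (mu : K) (n : ℕ) (Y : L)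
    (h : ((ψ.toLinearMap - mu • (LinearMap.id : L →ₗ[K] L)) ^ n) Y = 0) :
    ((ψ.toLinearMap - mu • (LinearMap.id : L →ₗ[K] L)) ^ n) (ψ Y) = 0 := by
  have hc : Commute (ψ.toLinearMap - mu • (LinearMap.id : L →ₗ[K] L) : Module.End K L)
      ψ.toLinearMap :=
    (Commute.refl _).sub_left ((Commute.one_left _).smul_left mu)
  have := LinearMap.congr_fun (hc.pow_left n).eq Y
  simpa [Module.End.mul_apply, h] using this

lemma pow_sub_smul_lie_eq_zero {K L : Type*} [Field K] [LieRing L] [LieAlgebra K L]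
    (ψ : L →ₗ⁅K⁆ L) (lam mu : K) (m n : ℕ) (X Y : L)
    (hX : ((ψ.toLinearMap - lam • (LinearMap.id : L →ₗ[K] L)) ^ m) X = 0)
    (hY : ((ψ.toLinearMap - mu • (LinearMap.id : L →ₗ[K] L)) ^ n) Y = 0) :
    ((ψ.toLinearMap - (lam * mu) • (LinearMap.id : L →ₗ[K] L)) ^ (m + n - 1)) ⁅X, Y⁆ = 0 := by
  induction m generalizing n X Y with
  | zero =>
    have hX0 : X = 0 := by simpa using hX
    simp [hX0]
  | succ m ihm =>
    induction n generalizing Y with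
    | zero =>
      have hY0 : Y = 0 := by simpa using hY
      simp [hY0]
    | succ n ihn =>
      have h1 := ihm (n + 1) _ (ψ Y) (by rwa [pow_succ, Module.End.mul_apply] at hX)
        (pow_sub_smul_map_eq_zero ψ mu (n + 1) Y hY)
      have h2 := ihn _ (by rwa [pow_succ, Module.End.mul_apply] at hY)
      rw [show m + (n + 1) - 1 = m + n by omega] at h1
      rw [show m + 1 + n - 1 = m + n by omega] at h2
      rw [show m + 1 + (n + 1) - 1 = m + n + 1 by omega, pow_succ, Module.End.mul_apply,
        sub_smul_lie, map_add, map_smul, h1, h2, smul_zero, add_zero]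

/-- Let `K` be a field, `L` a Lie algebra over `K` and `ψ : L → L` a Lie algebra
homomorphism. For `λ ∈ K` let `E^λ = {v ∈ L : (ψ − λ·id)^n v = 0 for some n}` be the
generalized eigenspace. Then `⁅E^λ, E^μ⁆ ⊆ E^{λμ}`; concretely, if `(ψ − λ·id)^m X = 0`
and `(ψ − μ·id)^n Y = 0` then `(ψ − λμ·id)^{m+n−1} ⁅X, Y⁆ = 0`. -/
theorem stmt_6 {K L : Type*} [Field K] [LieRing L] [LieAlgebra K L]
    (ψ : L →ₗ⁅K⁆ L) :
    (∀ lam mu : K, ∀ X Y : L,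
        (∃ n : ℕ, ((ψ.toLinearMap - lam • (LinearMap.id : L →ₗ[K] L)) ^ n) X = 0) →
        (∃ n : ℕ, ((ψ.toLinearMap - mu • (LinearMap.id : L →ₗ[K] L)) ^ n) Y = 0) →
        (∃ n : ℕ, ((ψ.toLinearMap - (lam * mu) • (LinearMap.id : L →ₗ[K] L)) ^ n) ⁅X, Y⁆ = 0)) ∧
    (∀ lam mu : K, ∀ m n : ℕ, ∀ X Y : L,
        ((ψ.toLinearMap - lam • (LinearMap.id : L →ₗ[K] L)) ^ m) X = 0 →
        ((ψ.toLinearMap - mu • (LinearMap.id : L →ₗ[K] L)) ^ n) Y = 0 →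
        ((ψ.toLinearMap - (lam * mu) • (LinearMap.id : L →ₗ[K] L)) ^ (m + n - 1)) ⁅X, Y⁆ = 0) := by
  exact ⟨fun lam mu X Y ⟨m, hX⟩ ⟨n, hY⟩ =>
      ⟨m + n - 1, pow_sub_smul_lie_eq_zero ψ lam mu m n X Y hX hY⟩,
    pow_sub_smul_lie_eq_zero ψ⟩
end

section
/- Let L be a finite-dimensional complex Lie algebra and ψ : L → L a Lie algebra automorphism. Call μ ∈ ℂ a horizontal eigenvalue of ψ if there exists Y ∈ L with Y ∉ [L, L] and ψ(Y) − μY ∈ [L, L] (i.e., μ is an eigenvalue of the map induced by ψ on L/[L,L]). Then for every i ≥ 1 and every λ ∈ ℂ: if there exists X ∈ C^i(L) with X ∉ C^{i+1}(L) and ψ(X) − λX ∈ C^{i+1}(L) (i.e., λ is an eigenvalue of the map induced by ψ on C^i(L)/C^{i+1}(L)), then λ = μ_1 μ_2 ⋯ μ_i is a product of i horizontal eigenvalues μ_1, …, μ_i of ψ. -/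
/-!
Write `C k` for `lowerCentralSeries ℂ L L k`. Over `ℂ`, `L` is the sum of the generalized eigenspaces
of `ψ`, and the one for `μ` lies in `C 1` unless `μ` is horizontal. Hence `L` is spanned modulo `C 1`
by generalized eigenvectors with horizontal eigenvalue. Since `ψ` preserves brackets, the bracket of
generalized eigenvectors for `α` and `β` is one for `α * β` (`lie_mem_maxGenEigenspace_mul`), and
`⁅C 1, C k⁆ ≤ C (k + 2)`; by induction `C k` is spanned modulo `C (k + 1)` by generalized
eigenvectors whose eigenvalues are products of `k + 1` horizontal ones (`lcs_le_sup`).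

Consequently, for `X ∈ C k` some polynomial `q` with all its roots among these products satisfies
`q(ψ) X ∈ C (k + 1)`. If also `ψ X ≡ λ X` modulo `C (k + 1)`, then `q(λ) X ∈ C (k + 1)`; so `λ` is
a root of `q` as soon as `X ∉ C (k + 1)`.
-/

namespace HorizontalEigenvalue

open LieModule Polynomial

variable {L : Type*} [LieRing L] [LieAlgebra ℂ L]

/-- `ψ` as a linear endomorphism. -/
abbrev lin (ψ : L ≃ₗ⁅ℂ⁆ L) : Module.End ℂ L := (ψ : L →ₗ[ℂ] L)

/-- `μ` is an eigenvalue of the map induced by `ψ` on `L / [L, L]`. -/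
def IsHorizontal (ψ : L ≃ₗ⁅ℂ⁆ L) (μ : ℂ) : Prop :=
  ∃ Y : L, Y ∉ lowerCentralSeries ℂ L L 1 ∧ ψ Y - μ • Y ∈ lowerCentralSeries ℂ L L 1

/-- `c` is a product of `n` horizontal eigenvalues, repetitions allowed. -/
def IsProd (ψ : L ≃ₗ⁅ℂ⁆ L) (n : ℕ) (c : ℂ) : Prop :=
  ∃ μ : Fin n → ℂ, (∀ j, IsHorizontal ψ (μ j)) ∧ c = ∏ j, μ j

lemma IsHorizontal.isProd_one {ψ : L ≃ₗ⁅ℂ⁆ L} {μ : ℂ} (h : IsHorizontal ψ μ) : IsProd ψ 1 μ :=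
  ⟨fun _ => μ, fun _ => h, by simp⟩

lemma IsProd.mul {ψ : L ≃ₗ⁅ℂ⁆ L} {m n : ℕ} {a b : ℂ} (ha : IsProd ψ m a) (hb : IsProd ψ n b) :
    IsProd ψ (m + n) (a * b) := by
  obtain ⟨f, hf, rfl⟩ := ha
  obtain ⟨g, hg, rfl⟩ := hb
  refine ⟨Fin.append f g, fun j => ?_, by simp [Fin.prod_univ_add]⟩
  induction j using Fin.addCases <;> simp [hf, hg]

/-- The span of the generalized eigenvectors of `ψ` whose eigenvalue is a product of `n` horizontal
eigenvalues. -/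
def prodSpan (ψ : L ≃ₗ⁅ℂ⁆ L) (n : ℕ) : Submodule ℂ L :=
  Submodule.span ℂ {x | ∃ c, IsProd ψ n c ∧ x ∈ (lin ψ).maxGenEigenspace c}

lemma map_mem_lcs (ψ : L ≃ₗ⁅ℂ⁆ L) (k : ℕ) : ∀ x ∈ lowerCentralSeries ℂ L L k,
    ψ x ∈ lowerCentralSeries ℂ L L k := by
  induction k with
  | zero => simp
  | succ k ih =>
    intro x hx
    rw [lowerCentralSeries_succ] at hx ⊢
    rw [← LieSubmodule.mem_toSubmodule, LieSubmodule.lieIdeal_oper_eq_linear_span'] at hx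
    induction hx using Submodule.span_induction with
    | mem x h =>
      obtain ⟨y, -, m, hm, rfl⟩ := h
      rw [LieEquiv.map_lie]
      exact LieSubmodule.lie_mem_lie trivial (ih m hm)
    | zero => simp
    | add x y _ _ hx hy => rw [map_add]; exact add_mem hx hy
    | smul a x _ hx => rw [map_smul]; exact Submodule.smul_mem (LieSubmodule.toSubmodule _) a hx

lemma lie_mem_lcs_succ {k : ℕ} (x : L) {m : L} (hm : m ∈ lowerCentralSeries ℂ L L k) :
    ⁅x, m⁆ ∈ lowerCentralSeries ℂ L L (k + 1) := by
  rw [lowerCentralSeries_succ]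
  exact LieSubmodule.lie_mem_lie trivial hm

lemma lie_mem_lcs_add_two {k : ℕ} {x m : L} (hx : x ∈ lowerCentralSeries ℂ L L 1)
    (hm : m ∈ lowerCentralSeries ℂ L L k) : ⁅x, m⁆ ∈ lowerCentralSeries ℂ L L (k + 2) := by
  rw [show (1 : ℕ) = 0 + 1 from rfl, lowerCentralSeries_succ, ← LieSubmodule.mem_toSubmodule,
    LieSubmodule.lieIdeal_oper_eq_linear_span'] at hx
  induction hx using Submodule.span_induction with
  | mem x h =>
    obtain ⟨y, -, z, -, rfl⟩ := h
    rw [lie_lie]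
    exact sub_mem (lie_mem_lcs_succ _ (lie_mem_lcs_succ _ hm))
      (lie_mem_lcs_succ _ (lie_mem_lcs_succ _ hm))
  | zero => simp
  | add x y _ _ hx hy => rw [add_lie]; exact add_mem hx hy
  | smul a x _ hx => rw [smul_lie]; exact Submodule.smul_mem (LieSubmodule.toSubmodule _) a hx

/-- With `A = ψ - α`, `B = ψ - β`, one has
`(ψ - αβ)⁅x, y⁆ = ⁅A x, B y⁆ + β⁅A x, y⁆ + α⁅x, B y⁆`, and every term on the right has a smaller
total order of nilpotency. -/
lemma pow_lie_eq_zero (ψ : L ≃ₗ⁅ℂ⁆ L) (α β : ℂ) (n : ℕ) : ∀ (a b : ℕ) (x y : L), a + b ≤ n →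
    ((lin ψ - α • 1) ^ a) x = 0 → ((lin ψ - β • 1) ^ b) y = 0 →
    ((lin ψ - (α * β) • 1) ^ n) ⁅x, y⁆ = 0 := by
  induction n with
  | zero =>
    intro a b x y h hx hy
    obtain rfl : a = 0 := by omega
    simp_all
  | succ n ih =>
    intro a b x y h hx hy
    rcases a with _ | a
    · simp_all
    rcases b with _ | b
    · simp_all
    rw [pow_succ, Module.End.mul_apply] at hx hy ⊢
    have key : (lin ψ - (α * β) • 1) ⁅x, y⁆ =
        ⁅(lin ψ - α • 1) x, (lin ψ - β • 1) y⁆ + β • ⁅(lin ψ - α • 1) x, y⁆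
          + α • ⁅x, (lin ψ - β • 1) y⁆ := by
      have hψ : lin ψ ⁅x, y⁆ = ⁅lin ψ x, lin ψ y⁆ := LieEquiv.map_lie ψ x y
      simp only [LinearMap.sub_apply, LinearMap.smul_apply, Module.End.one_apply, hψ, sub_lie,
        lie_sub, smul_lie, lie_smul, smul_sub, smul_smul]
      module
    rw [key, map_add, map_add, map_smul, map_smul, ih a b _ _ (by omega) hx hy,
      ih a (b + 1) _ _ (by omega) hx (by rwa [pow_succ, Module.End.mul_apply]),
      ih (a + 1) b _ _ (by omega) (by rwa [pow_succ, Module.End.mul_apply]) hy]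
    simp

lemma lie_mem_maxGenEigenspace_mul (ψ : L ≃ₗ⁅ℂ⁆ L) {α β : ℂ} {x y : L}
    (hx : x ∈ (lin ψ).maxGenEigenspace α) (hy : y ∈ (lin ψ).maxGenEigenspace β) :
    ⁅x, y⁆ ∈ (lin ψ).maxGenEigenspace (α * β) := by
  rw [Module.End.mem_maxGenEigenspace] at hx hy ⊢
  obtain ⟨a, ha⟩ := hx
  obtain ⟨b, hb⟩ := hy
  exact ⟨a + b, pow_lie_eq_zero ψ α β _ a b x y le_rfl ha hb⟩

lemma lie_mem_prodSpan (ψ : L ≃ₗ⁅ℂ⁆ L) {m n : ℕ} {x y : L} (hx : x ∈ prodSpan ψ m)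
    (hy : y ∈ prodSpan ψ n) : ⁅x, y⁆ ∈ prodSpan ψ (m + n) := by
  induction hx using Submodule.span_induction with
  | mem x h =>
    obtain ⟨c, hc, hx⟩ := h
    induction hy using Submodule.span_induction with
    | mem y h =>
      obtain ⟨d, hd, hy⟩ := h
      exact Submodule.subset_span ⟨_, hc.mul hd, lie_mem_maxGenEigenspace_mul ψ hx hy⟩
    | zero => simp
    | add y z _ _ hy hz => rw [lie_add]; exact add_mem hy hz
    | smul a y _ hy => rw [lie_smul]; exact Submodule.smul_mem _ a hy
  | zero => simp
  | add x z _ _ hx hz => rw [add_lie]; exact add_mem hx hz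
  | smul a x _ hx => rw [smul_lie]; exact Submodule.smul_mem _ a hx

/-- If `x` lies outside `[L, L]`, the last iterate `(ψ - μ)^n x` outside `[L, L]` shows that `μ` is
horizontal. -/
lemma mem_or_isHorizontal (ψ : L ≃ₗ⁅ℂ⁆ L) {μ : ℂ} {x : L}
    (hx : x ∈ (lin ψ).maxGenEigenspace μ) :
    x ∈ lowerCentralSeries ℂ L L 1 ∨ IsHorizontal ψ μ := by
  rw [Module.End.mem_maxGenEigenspace] at hx
  obtain ⟨n, hn⟩ := hx
  induction n generalizing x with
  | zero => left; simp_all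
  | succ n ih =>
    rw [pow_succ, Module.End.mul_apply] at hn
    by_cases h : x ∈ lowerCentralSeries ℂ L L 1
    · exact .inl h
    · right
      rcases ih hn with h' | h'
      · exact ⟨x, h, h'⟩
      · exact h'

lemma top_le_sup [FiniteDimensional ℂ L] (ψ : L ≃ₗ⁅ℂ⁆ L) :
    ⊤ ≤ prodSpan ψ 1 ⊔ (lowerCentralSeries ℂ L L 1).toSubmodule := by
  rw [← Module.End.iSup_maxGenEigenspace_eq_top (lin ψ)]
  refine iSup_le fun μ x hx => ?_
  rcases mem_or_isHorizontal ψ hx with h | h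
  · exact Submodule.mem_sup_right h
  · exact Submodule.mem_sup_left (Submodule.subset_span ⟨μ, h.isProd_one, hx⟩)

lemma lcs_le_sup [FiniteDimensional ℂ L] (ψ : L ≃ₗ⁅ℂ⁆ L) (k : ℕ) :
    (lowerCentralSeries ℂ L L k).toSubmodule ≤
      prodSpan ψ (k + 1) ⊔ (lowerCentralSeries ℂ L L (k + 1)).toSubmodule := by
  induction k with
  | zero => exact le_top.trans (top_le_sup ψ)
  | succ k ih =>
    rw [lowerCentralSeries_succ, LieSubmodule.lieIdeal_oper_eq_linear_span', Submodule.span_le]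
    rintro _ ⟨x, -, m, hm, rfl⟩
    obtain ⟨h, hh, c, hc, rfl⟩ := Submodule.mem_sup.1 (top_le_sup ψ (Submodule.mem_top (x := x)))
    obtain ⟨e, he, z, hz, hez⟩ := Submodule.mem_sup.1 (ih hm)
    have h1 : ⁅c, m⁆ ∈ lowerCentralSeries ℂ L L (k + 2) := lie_mem_lcs_add_two hc hm
    have h2 : ⁅h, z⁆ ∈ lowerCentralSeries ℂ L L (k + 2) := lie_mem_lcs_succ h hz
    have h3 : ⁅h, e⁆ ∈ prodSpan ψ (k + 1 + 1) := add_comm 1 (k + 1) ▸ lie_mem_prodSpan ψ hh he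
    refine Submodule.mem_sup.2 ⟨_, h3, _, add_mem h2 h1, ?_⟩
    rw [add_lie, ← hez, lie_add, lie_add, add_assoc]

lemma aeval_mem_lcs (ψ : L ≃ₗ⁅ℂ⁆ L) (k : ℕ) (q : ℂ[X]) {x : L}
    (hx : x ∈ lowerCentralSeries ℂ L L k) :
    aeval (lin ψ) q x ∈ lowerCentralSeries ℂ L L k :=
  aeval_apply_smul_mem_of_le_comap (q := (lowerCentralSeries ℂ L L k).toSubmodule) hx q (lin ψ)
    (map_mem_lcs ψ k)

lemma exists_aeval_eq_zero (ψ : L ≃ₗ⁅ℂ⁆ L) (n : ℕ) {x : L} (hx : x ∈ prodSpan ψ n) :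
    ∃ q : ℂ[X], (∀ c, q.eval c = 0 → IsProd ψ n c) ∧ aeval (lin ψ) q x = 0 := by
  induction hx using Submodule.span_induction with
  | mem x h =>
    obtain ⟨c, hc, hx⟩ := h
    obtain ⟨a, ha⟩ := (Module.End.mem_maxGenEigenspace _ _ _).1 hx
    refine ⟨(X - C c) ^ a, fun d hd => ?_, ?_⟩
    · have : d - c = 0 := by simpa using eq_zero_of_pow_eq_zero (by simpa using hd)
      rwa [sub_eq_zero.1 this]
    · simpa [Algebra.algebraMap_eq_smul_one] using ha
  | zero => exact ⟨1, by simp⟩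
  | add x y _ _ hx hy =>
    obtain ⟨p, hp, hpx⟩ := hx
    obtain ⟨q, hq, hqy⟩ := hy
    refine ⟨p * q, fun c hc => ?_, ?_⟩
    · rw [eval_mul, mul_eq_zero] at hc
      exact hc.elim (hp c) (hq c)
    · have hx' : aeval (lin ψ) (p * q) x = 0 := by
        rw [mul_comm, map_mul, Module.End.mul_apply, hpx, map_zero]
      have hy' : aeval (lin ψ) (p * q) y = 0 := by
        rw [map_mul, Module.End.mul_apply, hqy, map_zero]
      rw [map_add, hx', hy', add_zero]
  | smul a x _ hx =>
    obtain ⟨p, hp, hpx⟩ := hx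
    exact ⟨p, hp, by rw [map_smul, hpx, smul_zero]⟩

/-- If `ψ X ≡ lam X`, then `q(ψ) X ≡ q(lam) X`, because `T - lam` divides `q - q(lam)`. -/
lemma aeval_sub_eval_mem (ψ : L ≃ₗ⁅ℂ⁆ L) (k : ℕ) (q : ℂ[X]) {lam : ℂ} {x : L}
    (hx : ψ x - lam • x ∈ lowerCentralSeries ℂ L L k) :
    aeval (lin ψ) q x - q.eval lam • x ∈ lowerCentralSeries ℂ L L k := by
  obtain ⟨r, hr⟩ := X_sub_C_dvd_sub_C_eval (p := q) (a := lam)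
  have h := congrArg (fun p => aeval (lin ψ) p x) ((mul_comm _ r).symm.trans hr.symm)
  have h' : aeval (lin ψ) r (ψ x - lam • x) = aeval (lin ψ) q x - q.eval lam • x := by
    simpa [Algebra.algebraMap_eq_smul_one] using h
  exact h' ▸ aeval_mem_lcs ψ k r hx

end HorizontalEigenvalue


/-- Let `L` be a finite-dimensional complex Lie algebra and `ψ : L → L` a Lie algebra
automorphism. Call `μ ∈ ℂ` a horizontal eigenvalue of `ψ` if there is `Y ∉ [L, L]` with
`ψ(Y) − μY ∈ [L, L]`. If, for `i ≥ 1`, there is `X ∈ C^i(L) \ C^{i+1}(L)` with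
`ψ(X) − λX ∈ C^{i+1}(L)`, then `λ` is a product of `i` horizontal eigenvalues of `ψ`.

The paper's lower central series `C^1(L) = L`, `C^{i+1}(L) = [L, C^i(L)]` corresponds to
`Mathlib`'s `LieModule.lowerCentralSeries ℂ L L` shifted by one:
`C^i(L) = LieModule.lowerCentralSeries ℂ L L (i - 1)`. -/
theorem stmt_7 {L : Type*} [LieRing L] [LieAlgebra ℂ L] [FiniteDimensional ℂ L]
    (ψ : L ≃ₗ⁅ℂ⁆ L) :
    ∀ i : ℕ, 1 ≤ i → ∀ lam : ℂ,
      (∃ X : L, X ∈ LieModule.lowerCentralSeries ℂ L L (i - 1) ∧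
          X ∉ LieModule.lowerCentralSeries ℂ L L i ∧
          ψ X - lam • X ∈ LieModule.lowerCentralSeries ℂ L L i) →
      ∃ μ : Fin i → ℂ,
        (∀ j : Fin i, ∃ Y : L, Y ∉ LieModule.lowerCentralSeries ℂ L L 1 ∧
            ψ Y - μ j • Y ∈ LieModule.lowerCentralSeries ℂ L L 1) ∧
        lam = ∏ j, μ j := by
  rintro (_ | k) hi lam ⟨X, hX, hX', hlam⟩
  · omega
  obtain ⟨e, he, z, hz, rfl⟩ := Submodule.mem_sup.1 (HorizontalEigenvalue.lcs_le_sup ψ k hX)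
  obtain ⟨q, hq, hqe⟩ := HorizontalEigenvalue.exists_aeval_eq_zero ψ (k + 1) he
  refine hq lam ?_
  by_contra h0
  have h1 := HorizontalEigenvalue.aeval_sub_eval_mem ψ (k + 1) q hlam
  rw [map_add, hqe, zero_add] at h1
  have h2 := sub_mem (HorizontalEigenvalue.aeval_mem_lcs ψ (k + 1) q hz) h1
  rw [sub_sub_cancel] at h2
  exact hX' ((Submodule.smul_mem_iff (LieModule.lowerCentralSeries ℂ L L (k + 1)).toSubmodule h0).1 h2)
end

section
/- Let G be a group equipped with a right-invariant metric d (d(xz, yz) = d(x, y) for all x, y, z), let Γ be a subgroup of G, and let Ψ : G → G be a group homomorphism with Ψ(Γ) ⊆ Γ. Suppose F : G → G satisfies F(xγ) = F(x)·Ψ(γ) for all x ∈ G and γ ∈ Γ, and suppose H : G → G satisfies Ψ ∘ H = H ∘ F together with the uniform bound d(H(x), x) ≤ C₀ for all x ∈ G, for some constant C₀ ≥ 0. Then for every x ∈ G, every γ ∈ Γ, and every integer i ≥ 0, d( Ψ^i( H(xγ)·γ⁻¹ ), Ψ^i( H(x) ) ) ≤ 2C₀. (In particular the forward Ψ-orbits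 of H(xγ)γ⁻¹ and H(x) stay uniformly close, which is the content of the lemma that H(xγ)γ⁻¹ lies on the stable leaf of H(x) when Ψ is a hyperbolic automorphism.) -/
/-- Let `G` be a group with a right-invariant metric, `Γ ≤ G` a subgroup, and `Ψ : G → G` a
homomorphism with `Ψ(Γ) ⊆ Γ`. If `F` satisfies `F(xγ) = F(x)Ψ(γ)`, and `H` satisfies
`Ψ ∘ H = H ∘ F` and `d(H(x), x) ≤ C₀` for all `x`, then for every `x ∈ G`, `γ ∈ Γ` and
`i ≥ 0`, `d(Ψ^i(H(xγ)γ⁻¹), Ψ^i(H(x))) ≤ 2C₀`. -/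
theorem stmt_9 {G : Type*} [Group G] [MetricSpace G]
    (hright : ∀ x y z : G, dist (x * z) (y * z) = dist x y)
    (Γ : Subgroup G) (Ψ : G →* G) (hΨΓ : ∀ γ ∈ Γ, Ψ γ ∈ Γ)
    (F H : G → G)
    (hF : ∀ x : G, ∀ γ ∈ Γ, F (x * γ) = F x * Ψ γ)
    (hconj : ∀ x : G, Ψ (H x) = H (F x))
    (C₀ : ℝ) (hC₀ : 0 ≤ C₀) (hbound : ∀ x : G, dist (H x) x ≤ C₀) :
    ∀ x : G, ∀ γ ∈ Γ, ∀ i : ℕ,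
      dist ((⇑Ψ)^[i] (H (x * γ) * γ⁻¹)) ((⇑Ψ)^[i] (H x)) ≤ 2 * C₀ := by
  intro x γ hγ i
  -- Equivariance and semiconjugacy give `Ψ (H (x * γ) * γ⁻¹) = H (F x * Ψ γ) * (Ψ γ)⁻¹`, so one
  -- application of `Ψ` replaces `(x, γ)` by `(F x, Ψ γ)`, and only `i = 0` needs an estimate.
  induction i generalizing x γ with
  | zero =>
    have h : dist (H (x * γ) * γ⁻¹) x ≤ C₀ := by
      rw [← hright _ _ γ, inv_mul_cancel_right]
      exact hbound (x * γ)
    have := dist_triangle_right (H (x * γ) * γ⁻¹) (H x) x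
    simp only [Function.iterate_zero, id_eq]
    linarith [hbound x]
  | succ i ih =>
    rw [Function.iterate_succ_apply, Function.iterate_succ_apply, map_mul, map_inv, hconj, hconj,
      hF x γ hγ]
    exact ih (F x) (Ψ γ) (hΨΓ γ hγ)
end
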